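/- For every infinite cardinal λ there exists a torsion-free abelian group M of cardinality λ with End(M) ≅ ℤ such that for every infinite cardinal κ ≥ λ there exists a cellular cover c : G → M whose kernel has cardinality κ. In particular, the class of cellular covers of M (up to isomorphism) is a proper class. -/

import Mathlib

/-!
The groups are given by divisibility conditions on rational vectors. For partial maps
`f p : I → Option J`, one for each prime `p`, let `Grp f` consist of the finitely supported
`v : I →₀ ℚ` whose push-forward along every `f p` is `p`-integral. The vectors in the kernel of
the push-forward along `f p` are exactly those divisible by all powers of `p` (`coef_hom_eq_zero`),
so a homomorphism of such groups is a `ℚ`-linear map respecting these kernels, one for each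
prime (`compat_hom`, `hom_apply`). Thus countably many constraints on a set can be imposed on
endomorphisms, and the question becomes combinatorial.

The combinatorial core (`exists_rigid`) provides, for every infinite cardinal, a set of that size
with countably many constraints respected by scalars only. It follows from `nameable`: the
points of a set with at most `lam` names can be embedded in a larger set with countably many
constraints that confine the image of a basis vector to points with the same name. Countable
sets of names are immediate, singular cardinals reduce to smaller ones by a fibration
(`Nameable.fibration`), and for regular uncountable cardinals a stationary set of points of
countable cofinality, with ladders, and stationarily different subsets coding the names are
used (`exists_distinguishing`, `nameable_of_wellOrder`).

For the cover, `M` is built on a rigid system on `I` with `lam` points and `G` on its disjoint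
union with a rigid system on `I'` with `κ` points, `c : G → M` being the restriction to `I`.
One prime makes the subspace over `I'` fully invariant and kills it in every homomorphism `G → M`,
and another prime forces the two scalars of an endomorphism of `G` to agree. Scalars are
integers because every prime has a defined label. Hence `End G = ℤ`, `Hom(G, M) = ℤ c` and
`End M = ℤ`, so `c` is a cellular cover, and its kernel contains the basis vectors
over `I'` and therefore has the required size.
-/

universe u

namespace CellCover

open Cardinal

noncomputable section

/-! ### Constraints and compatible families -/

open scoped Classical in
/-- A *constraint* on a set `I` is a partial map `f : I → Option J`. For a label `j`, `coef f j v`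
is the sum of the coordinates of the rational vector `v` at the points labelled `j`. These sums
are the coordinates of the image of `v` under the linear map sending the basis vector `e i` to
`e (f i)`, or to `0` if `f i = none`. -/
def coef {I J : Type*} (f : I → Option J) (j : J) : (I →₀ ℚ) →ₗ[ℚ] ℚ :=
  Finsupp.linearCombination ℚ (fun i => if f i = some j then (1 : ℚ) else 0)

open scoped Classical in
theorem coef_apply {I J : Type*} (f : I → Option J) (j : J) (v : I →₀ ℚ) :
    coef f j v = ∑ i ∈ v.support, if f i = some j then v i else 0 := by
  simp [coef, Finsupp.linearCombination_apply, Finsupp.sum]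

open scoped Classical in
theorem coef_single {I J : Type*} (f : I → Option J) (j : J) (i : I) (r : ℚ) :
    coef f j (Finsupp.single i r) = if f i = some j then r else 0 := by
  simp [coef]

theorem exists_of_coef_ne {I J : Type*} {f : I → Option J} {j : J} {v : I →₀ ℚ}
    (h : coef f j v ≠ 0) : ∃ i, v i ≠ 0 ∧ f i = some j := by
  classical
  rw [coef_apply] at h
  obtain ⟨i, hi, h⟩ := Finset.exists_ne_zero_of_sum_ne_zero h
  refine ⟨i, by simpa using hi, ?_⟩
  by_contra h'
  simp [h'] at h

theorem coef_eq_of_unique {I J : Type*} {f : I → Option J} {j : J} {v : I →₀ ℚ} {i : I}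
    (hi : f i = some j) (h : ∀ i', v i' ≠ 0 → f i' = some j → i' = i) :
    coef f j v = v i := by
  classical
  rw [coef_apply, Finset.sum_eq_single i]
  · simp [hi]
  · intro b hb hne
    rw [if_neg]
    exact fun hb' => hne (h b (by simpa using hb) hb')
  · intro h0
    simpa [hi] using h0

theorem coef_comap {K K' L L' : Type*} {g : K → Option L} {g' : K' → Option L'} {d : K → K'}
    (hd : Function.Injective d) {l : L} {l' : L'}
    (hg : ∀ y, g y = some l ↔ g' (d y) = some l') {v : K' →₀ ℚ}
    (hv : ∀ y, v y ≠ 0 → g' y = some l' → y ∈ Set.range d) :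
    coef g l (Finsupp.comapDomain d v hd.injOn) = coef g' l' v := by
  classical
  rw [coef_apply, coef_apply]
  simp only [hg, Finsupp.comapDomain_apply]
  rw [Finsupp.comapDomain]
  refine Finset.sum_preimage d v.support hd.injOn
    (fun i => if g' i = some l' then v i else 0) ?_
  intro y hy hr
  exact if_neg fun h => hr (hv y (by simpa using hy) h)

/-- A family of vectors `a x`, thought of as the images of basis vectors under a linear map `φ`, is
compatible with constraints `f` and `g` if `φ` maps the kernel of the linear map induced by `f`
into the kernel of the one induced by `g`. The former kernel is spanned by the `e x - e y` with
`f x = f y` and the `e x` with `f x = none`. -/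
def Compat {I J K L : Type*} (f : I → Option J) (g : K → Option L) (a : I → K →₀ ℚ) : Prop :=
  (∀ x y, f x = f y → ∀ j, coef g j (a x) = coef g j (a y)) ∧
    ∀ x, f x = none → ∀ j, coef g j (a x) = 0

/-- Compatibility is inherited by the block of `a` with rows in the image of `e` and columns in the
image of `d`, when the constraints on the big sets restrict to those on the small ones. -/
theorem Compat.comap {I J K L I' J' K' L' : Type*} {f : I → Option J} {g : K → Option L}
    {f' : I' → Option J'} {g' : K' → Option L'} {a : I' → K' →₀ ℚ} (H : Compat f' g' a)
    {e : I → I'} {d : K → K'} (hd : Function.Injective d)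
    (he : ∀ x y, f x = f y → f' (e x) = f' (e y)) (he0 : ∀ x, f x = none → f' (e x) = none)
    (η : L → L') (hg : ∀ y l, g y = some l ↔ g' (d y) = some (η l))
    (hv : ∀ x y l, a (e x) y ≠ 0 → g' y = some (η l) → y ∈ Set.range d) :
    Compat f g (fun x => Finsupp.comapDomain d (a (e x)) hd.injOn) := by
  refine ⟨fun x y h l => ?_, fun x h l => ?_⟩
  · rw [coef_comap hd (fun y => hg y l) (fun z => hv x z l),
      coef_comap hd (fun y => hg y l) (fun z => hv y z l)]
    exact H.1 _ _ (he _ _ h) _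
  · rw [coef_comap hd (fun y => hg y l) (fun z => hv x z l)]
    exact H.2 _ (he0 _ h) _

open scoped Classical in
/-- The constraint undefined on `X` and injective elsewhere. It forces vectors indexed by `X` to be
supported on `X`. -/
def kill {I : Type*} (X : Set I) : I → Option I := fun x => if x ∈ X then none else some x

theorem kill_eq_none {I : Type*} {X : Set I} {x : I} : kill X x = none ↔ x ∈ X := by
  simp [kill]

theorem kill_eq_some {I : Type*} {X : Set I} {x y : I} :
    kill X x = some y ↔ x ∉ X ∧ x = y := by
  simp [kill]

theorem Compat.mem_of_kill {I J K : Type*} {f : I → Option J} {Y : Set K} {a : I → K →₀ ℚ}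
    (H : Compat f (kill Y) a) {x : I} (hx : f x = none) {y : K} (hy : a x y ≠ 0) : y ∈ Y := by
  by_contra h
  have := H.2 x hx y
  rw [coef_eq_of_unique (i := y) (by simp [kill, h])] at this
  · exact hy this
  · intro i' _ hi
    exact (kill_eq_some.1 hi).2

/-- If `y` is the only point with label `l` in the support of `a x`, then no cancellation occurs and
the label `l` also occurs in the support of `a x'` for every `x'` with the same label as `x`. -/
theorem Compat.exists_supp {I J K L : Type*} {f : I → Option J} {g : K → Option L}
    {a : I → K →₀ ℚ} (H : Compat f g a) {x x' : I} (hx : f x = f x') {y : K} {l : L}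
    (hy : a x y ≠ 0) (hl : g y = some l)
    (hu : ∀ y', a x y' ≠ 0 → g y' = some l → y' = y) :
    ∃ y', a x' y' ≠ 0 ∧ g y' = some l := by
  apply exists_of_coef_ne
  rw [← H.1 x x' hx, coef_eq_of_unique hl hu]
  exact hy

theorem exists_seq {I : Type*} {F : Set (I → Option I)} (hF : F.Countable) :
    ∃ f : ℕ → I → Option I, ∀ a : I → I →₀ ℚ, (∀ n, Compat (f n) (f n) a) →
      ∀ g ∈ F, Compat g g a := by
  obtain ⟨f, hf⟩ := (hF.insert some).exists_eq_range (Set.insert_nonempty _ _)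
  refine ⟨f, fun a ha g hg => ?_⟩
  have : g ∈ Set.range f := hf ▸ Set.mem_insert_of_mem _ hg
  obtain ⟨n, rfl⟩ := this
  exact ha n

/-! ### Nameable sets -/

/-- `N` is nameable below `lam` if every set `A` of size at most `lam` together with names
`ν : A → N` embeds in a set `I` of size at most `lam` carrying countably many constraints which
force the vector at a point of `A` to be supported on points of `A` with the same name. -/
def Nameable (lam : Cardinal.{u}) (N : Type u) : Prop :=
  ∀ (A : Type u) (ν : A → N), #A ≤ lam →
    ∃ (I : Type u) (ι : A → I) (f : ℕ → I → Option I), #I ≤ lam ∧ Function.Injective ι ∧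
      ∀ a : I → I →₀ ℚ, (∀ n, Compat (f n) (f n) a) →
        ∀ x y, a (ι x) y ≠ 0 → ∃ y', y = ι y' ∧ ν y' = ν x

theorem Nameable.of_injective {lam : Cardinal.{u}} {N N' : Type u} (h : Nameable lam N')
    {g : N → N'} (hg : Function.Injective g) : Nameable lam N := by
  intro A ν hA
  obtain ⟨I, ι, f, hI, hι, H⟩ := h A (g ∘ ν) hA
  refine ⟨I, ι, f, hI, hι, fun a ha x y hxy => ?_⟩
  obtain ⟨y', h1, h2⟩ := H a ha x y hxy
  exact ⟨y', h1, hg h2⟩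

theorem nameable_of_countable (lam : Cardinal.{u}) (N : Type u) [Countable N] :
    Nameable lam N := by
  intro A ν hA
  obtain ⟨f, hf⟩ := exists_seq (F := Set.range fun n : N => kill {x | ν x = n})
    (Set.countable_range _)
  refine ⟨A, id, f, hA, Function.injective_id, fun a ha x y hxy => ⟨y, rfl, ?_⟩⟩
  have := hf a ha _ ⟨ν x, rfl⟩
  exact this.mem_of_kill (x := x) (kill_eq_none.2 rfl) hxy

open scoped Classical in
/-- The constraint on `I` that copies `g` along `e : P → I` and is injective off the range. -/
def transport {P I : Type*} (e : P → I) (g : P → Option P) (z : I) : Option I :=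
  if h : ∃ p, e p = z then (g h.choose).map e else some z

theorem transport_apply {P I : Type*} {e : P → I} (he : Function.Injective e) (g : P → Option P)
    (p : P) : transport e g (e p) = (g p).map e := by
  have h : ∃ q, e q = e p := ⟨p, rfl⟩
  rw [transport, dif_pos h, he h.choose_spec]

/-- Points are first put in gadgets naming them inside their fibre; the points of all gadgets
are then named by the index of the fibre they belong to. -/
theorem Nameable.fibration {lam : Cardinal.{u}} (hlam : ℵ₀ ≤ lam) {N K : Type u} (κ : N → K)
    (hK : #K ≤ lam) (h : Nameable lam K) (hfib : ∀ k, Nameable lam {n // κ n = k}) :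
    Nameable lam N := by
  intro A ν hA
  have key := fun k => hfib k {x : A // κ (ν x) = k} (fun x => ⟨ν x.1, x.2⟩)
    ((mk_subtype_le _).trans hA)
  choose J i g hJ hi hg using key
  have hcard : #(Σ k, J k) ≤ lam := by
    rw [mk_sigma]
    calc Cardinal.sum (fun k => #(J k)) ≤ Cardinal.sum (fun _ : K => lam) :=
          Cardinal.sum_le_sum _ _ hJ
      _ = #K * lam := by simp
      _ ≤ lam * lam := by gcongr
      _ = lam := mul_eq_self hlam
  obtain ⟨I, ι, f, hI, hι, H⟩ := h (Σ k, J k) Sigma.fst hcard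
  obtain ⟨f', hf'⟩ := exists_seq (F := Set.range f ∪ Set.range fun m =>
      transport ι fun p : Σ k, J k => (g p.1 m p.2).map (Sigma.mk p.1))
    ((Set.countable_range _).union (Set.countable_range _))
  refine ⟨I, fun x => ι ⟨κ (ν x), i _ ⟨x, rfl⟩⟩, f', hI, ?_, fun a ha x y hxy => ?_⟩
  · intro x y hxy
    have h1 := hι hxy
    have aux : ∀ (k l : K) (u : {x : A // κ (ν x) = k}) (v : {x : A // κ (ν x) = l}),
        (⟨k, i k u⟩ : Σ k, J k) = ⟨l, i l v⟩ → u.1 = v.1 := by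
      intro k l u v huv
      obtain rfl : k = l := congrArg Sigma.fst huv
      rw [hi k (eq_of_heq (Sigma.mk.inj_iff.1 huv).2)]
    exact aux _ _ _ _ h1
  · have ha' := hf' a ha
    have hH := H a (fun n => ha' _ (Or.inl ⟨n, rfl⟩))
    set k := κ (ν x) with hk
    let e : J k → I := fun w => ι ⟨k, w⟩
    have he : Function.Injective e := fun u v huv =>
      eq_of_heq (Sigma.mk.inj_iff.1 (hι huv)).2
    have hsupp : ∀ w z, a (e w) z ≠ 0 → z ∈ Set.range e := by
      intro w z hz
      obtain ⟨⟨k', w'⟩, rfl, hk'⟩ := hH _ _ hz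
      obtain rfl : k' = k := hk'
      exact ⟨w', rfl⟩
    have hcomp : ∀ m w, transport ι (fun p : Σ k, J k => (g p.1 m p.2).map (Sigma.mk p.1)) (e w)
        = (g k m w).map e := by
      intro m w
      rw [transport_apply hι, Option.map_map]
      rfl
    have := hg k (fun w => Finsupp.comapDomain e (a (e w)) he.injOn) (fun m => by
      refine Compat.comap (ha' _ (Or.inr ⟨m, rfl⟩)) he ?_ ?_ e ?_ ?_
      · intro u v huv
        dsimp only
        rw [hcomp, hcomp, huv]
      · intro u hu
        dsimp only
        rw [hcomp, hu]
        rfl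
      · intro u l
        dsimp only
        rw [hcomp, ← Option.map_some (f := e), (Option.map_injective he).eq_iff]
      · intro u z l hz _
        exact hsupp _ _ hz)
    obtain ⟨w, rfl⟩ := hsupp _ _ hxy
    obtain ⟨y', h1, h2⟩ := this ⟨x, rfl⟩ w hxy
    refine ⟨y'.1, ?_, congrArg Subtype.val h2⟩
    subst h1
    obtain ⟨y', hy'⟩ := y'
    change ι ⟨k, _⟩ = _
    have aux : ∀ (l : K) (hl : κ (ν y') = l), 
        ι ⟨l, i l ⟨y', hl⟩⟩ = ι ⟨κ (ν y'), i _ ⟨y', rfl⟩⟩ := by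
      rintro _ rfl
      rfl
    exact aux _ _

/-! ### Stationary sets and ladders -/

/-- `T` is stationary, in the form: every function on `Λ` has a closure point in `T`. -/
def Stat {Λ : Type*} [LT Λ] (T : Set Λ) : Prop :=
  ∀ g : Λ → Λ, ∃ β ∈ T, ∀ γ < β, g γ < β

/-- The set `E` consists of the points of countable cofinality that are limits of a sequence of
successors `b n β`; successors are never in `E`. -/
theorem ladder_system {Λ : Type*} [LinearOrder Λ] [WellFoundedLT Λ] [Nonempty Λ]
    (R1 : ∀ u : ℕ → Λ, ∃ c, ∀ n, u n < c)
    (R2 : ∀ (g : Λ → Λ) (b : Λ), ∃ c, ∀ x ≤ b, g x < c) :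
    ∃ (E : Set Λ) (b : ℕ → Λ → Λ), (∀ β ∈ E, ∀ n, b n β < β ∧ b n β ∉ E) ∧
      (∀ β ∈ E, ∀ γ < β, ∃ n, γ < b n β) ∧ Stat E := by
  have hnx : ∀ x : Λ, ∃ y, x ⋖ y := by
    intro x
    have hne : {y | x < y}.Nonempty := by
      obtain ⟨c, hc⟩ := R2 id x
      exact ⟨c, hc x le_rfl⟩
    refine ⟨wellFounded_lt.min _ hne, wellFounded_lt.min_mem _ hne, fun z hz hz' => ?_⟩
    exact wellFounded_lt.not_lt_min {y | x < y} hz hz'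
  choose nx hnx using hnx
  let E : Set Λ := {β | ∃ u : ℕ → Λ, (∀ n, u n < β) ∧ (∀ γ < β, ∃ n, γ < u n) ∧
    ∀ n, ∃ y, y ⋖ u n}
  have hE : ∀ β, ∃ u : ℕ → Λ, β ∈ E → (∀ n, u n < β) ∧ (∀ γ < β, ∃ n, γ < u n) ∧
      ∀ n, ∃ y, y ⋖ u n := by
    intro β
    by_cases hβ : β ∈ E
    · exact ⟨hβ.choose, fun _ => hβ.choose_spec⟩
    · exact ⟨fun _ => β, fun h => absurd h hβ⟩
  choose b hb using hE
  refine ⟨E, fun n β => b β n, fun β hβ n => ⟨(hb β hβ).1 n, ?_⟩, fun β hβ => (hb β hβ).2.1, ?_⟩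
  · rintro ⟨u, hu1, hu2, -⟩
    obtain ⟨y, hy⟩ := (hb β hβ).2.2 n
    obtain ⟨m, hm⟩ := hu2 y hy.lt
    exact hy.2 hm (hu1 m)
  · -- Iterate a bound of `g` countably often and take the supremum of the successors reached.
    intro g
    choose G hG using fun x => R2 g x
    let u : ℕ → Λ := fun n => Nat.rec (nx (Classical.arbitrary Λ))
      (fun _ x => nx (max (G x) x)) n
    have hu : ∀ n, u (n + 1) = nx (max (G (u n)) (u n)) := fun n => rfl
    have hne : {c | ∀ n, u n < c}.Nonempty := R1 u
    have hmin := wellFounded_lt.min_mem _ hne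
    set β := wellFounded_lt.min _ hne with hβ
    have hcof : ∀ γ < β, ∃ n, γ ≤ u n := by
      intro γ hγ
      by_contra! hcon
      exact wellFounded_lt.not_lt_min {c | ∀ n, u n < c} hcon hγ
    have hstep : ∀ n, max (G (u n)) (u n) < u (n + 1) := fun n => (hnx _).lt
    refine ⟨β, ⟨u, hmin, ?_, ?_⟩, ?_⟩
    · intro γ hγ
      obtain ⟨n, hn⟩ := hcof γ hγ
      exact ⟨n + 1, hn.trans_lt ((le_max_right _ _).trans_lt (hstep n))⟩
    · rintro (_ | n)
      · exact ⟨_, hnx _⟩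
      · exact ⟨_, hnx _⟩
    · intro γ hγ
      obtain ⟨n, hn⟩ := hcof γ hγ
      exact (hG _ γ hn).trans (((le_max_left _ _).trans_lt (hstep n)).trans (hmin (n + 1)))

/-- A stationary set `E` with ladders `b`, and subsets `h i` of `E` which pairwise differ
stationarily often. For a suitable `n`, the regressive function `b n` takes stationarily often
values in `[ξ, ξ')`, for every `ξ` and some `ξ'`. The set `h i` consists of the `β` with
`b n β < v i`, where from one index to the next `v` jumps over such an interval. -/
theorem exists_distinguishing {Λ : Type*} [LinearOrder Λ] [WellFoundedLT Λ] [Nonempty Λ]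
    (R1 : ∀ u : ℕ → Λ, ∃ c, ∀ n, u n < c)
    (R2 : ∀ (g : Λ → Λ) (b : Λ), ∃ c, ∀ x ≤ b, g x < c) :
    ∃ (E : Set Λ) (b : ℕ → Λ → Λ) (h : Λ → Λ → Prop),
      (∀ β ∈ E, ∀ n, b n β < β ∧ b n β ∉ E) ∧ (∀ β ∈ E, ∀ γ < β, ∃ n, γ < b n β) ∧
      ∀ i j, i ≠ j → Stat {β ∈ E | ¬ (h i β ↔ h j β)} := by
  obtain ⟨E, b, hb, hcof, hE⟩ := ladder_system R1 R2
  have h1 : ∃ n, ∀ ξ, Stat {β ∈ E | ξ ≤ b n β} := by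
    by_contra! hcon
    unfold Stat at hcon
    push Not at hcon
    choose ξ g hg using hcon
    obtain ⟨ξ₀, hξ₀⟩ := R1 ξ
    choose g' hg' using fun γ => R1 (fun n => g n γ)
    obtain ⟨β, hβ, hcl⟩ := hE (fun γ => max ξ₀ (g' γ))
    have hξβ : ξ₀ < β := (le_max_left _ _).trans_lt (hcl (b 0 β) (hb β hβ 0).1)
    obtain ⟨n, hn⟩ := hcof β hβ ξ₀ hξβ
    obtain ⟨γ, hγ, hle⟩ := hg n β ⟨hβ, ((hξ₀ n).trans hn).le⟩
    exact absurd (hle.trans_lt ((hg' γ n).trans ((le_max_right _ _).trans_lt (hcl γ hγ))))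
      (lt_irrefl _)
  obtain ⟨n, hn⟩ := h1
  have h2 : ∀ ξ, ∃ ξ', Stat {β ∈ E | ξ ≤ b n β ∧ b n β < ξ'} := by
    intro ξ
    by_contra! hcon
    unfold Stat at hcon
    push Not at hcon
    choose g hg using hcon
    choose c hc using fun δ ζ => R2 (g ζ) δ
    choose G hG using fun δ => R2 (c δ) δ
    choose nx hnx using fun δ => R2 id δ
    obtain ⟨β, ⟨hβ, hξ⟩, hcl⟩ := hn ξ (fun δ => max (G δ) (nx δ))
    have hlt : nx (b n β) < β := (le_max_right _ _).trans_lt (hcl _ (hb β hβ n).1)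
    obtain ⟨γ, hγ, hle⟩ := hg (nx (b n β)) β ⟨hβ, hξ, hnx _ _ le_rfl⟩
    have hδ : max (nx (b n β)) γ < β := max_lt hlt hγ
    have := (le_max_left _ _).trans_lt (hcl _ hδ)
    refine absurd (hle.trans_lt ((hc (max (nx (b n β)) γ) _ γ (le_max_right _ _)).trans
      ((hG _ _ (le_max_left _ _)).trans this))) (lt_irrefl _)
  -- The starting points `v j` of pairwise disjoint blocks `[v i, nxt (v i))`.
  choose nxt hnxt using h2
  have h3 : ∃ v : Λ → Λ, ∀ j, ∀ i < j, nxt (v i) ≤ v j := by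
    classical
    choose S hS using R2
    let v : Λ → Λ := wellFounded_lt.fix fun j (rec : ∀ i, i < j → Λ) =>
      S (fun x => if hx : x < j then nxt (rec x hx) else x) j
    refine ⟨v, fun j i hij => ?_⟩
    have h := hS (fun x => if hx : x < j then nxt (v x) else x) j i hij.le
    have hv : v j = S (fun x => if hx : x < j then nxt (v x) else x) j :=
      wellFounded_lt.fix_eq _ j
    rw [hv]
    simpa [hij] using h.le
  obtain ⟨v, hv⟩ := h3
  have h4 : ∀ i j, i < j → ∀ g : Λ → Λ, ∃ β ∈ E, (∀ γ < β, g γ < β) ∧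
      ¬ b n β < v i ∧ b n β < v j := by
    intro i j hij g
    obtain ⟨β, ⟨hβ, h5, h6⟩, hcl⟩ := hnxt (v i) g
    exact ⟨β, hβ, hcl, h5.not_gt, h6.trans_le (hv j i hij)⟩
  refine ⟨E, b, fun i β => b n β < v i, hb, hcof, fun i j hij g => ?_⟩
  rcases hij.lt_or_gt with hij | hij
  · obtain ⟨β, hβ, hcl, h5, h6⟩ := h4 i j hij g
    exact ⟨β, ⟨hβ, by tauto⟩, hcl⟩
  · obtain ⟨β, hβ, hcl, h5, h6⟩ := h4 j i hij g
    exact ⟨β, ⟨hβ, by tauto⟩, hcl⟩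

/-! ### The gadget over a regular cardinal -/

/-- The gadget consists of pairs `(t, α)` of a list `t` in `Λ` and a point `α`, which itself is
identified with `([], α)`. Long lists are used only to see that the head never decreases from `x`
to the support of `a x`. The points of list length one with head in `E` record the name. -/
theorem nameable_of_wellOrder {lam : Cardinal.{u}} (hlam : ℵ₀ ≤ lam) {Λ : Type u}
    [LinearOrder Λ] [WellFoundedLT Λ] [Nonempty Λ] (hΛ : #Λ ≤ lam)
    (R1 : ∀ u : ℕ → Λ, ∃ c, ∀ n, u n < c)
    (R2 : ∀ (g : Λ → Λ) (b : Λ), ∃ c, ∀ x ≤ b, g x < c) :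
    Nameable lam Λ := by
  classical
  obtain ⟨E, b, h, hb, hcof, hstat⟩ := exists_distinguishing R1 R2
  intro A ν hA
  let drop : ℕ → List Λ × A → Option (List Λ × A) := fun k x =>
    some (if x.1.length = k + 1 then x.1.tail else x.1, x.2)
  let len : ℕ → List Λ × A → Option (List Λ × A) := fun k => kill {x | x.1.length = k}
  let dec : List Λ × A → Option (List Λ × A) :=
    kill {x | ∀ γ δ r, x.1 = γ :: δ :: r → γ < δ}
  let col : Prop → List Λ × A → Option (List Λ × A) := fun c =>
    kill {x | ∃ β ∈ E, x.1 = [β] ∧ (h (ν x.2) β ↔ c)}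
  let out : List Λ × A → Option (List Λ × A) := kill {x | ∃ γ ∉ E, x.1 = [γ]}
  let lad : ℕ → List Λ × A → Option (List Λ × A) := fun n x =>
    some (x.1.map fun β => if β ∈ E then b n β else β, x.2)
  obtain ⟨f, hf⟩ := exists_seq
    (F := Set.range drop ∪ Set.range len ∪ {dec} ∪ Set.range col ∪ {out} ∪ Set.range lad)
    ((((((Set.countable_range _).union (Set.countable_range _)).union
      (Set.countable_singleton _)).union (Set.countable_range _)).union
      (Set.countable_singleton _)).union (Set.countable_range _))
  refine ⟨List Λ × A, fun α => ([], α), f, ?_, fun x y hxy => (Prod.mk.inj hxy).2, ?_⟩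
  · rw [mk_prod, lift_id, lift_id]
    calc #(List Λ) * #A ≤ lam * lam := by
          gcongr
          exact (mk_list_le_max _).trans (max_le hlam hΛ)
      _ = lam := mul_eq_self hlam
  intro a ha
  have ha' := hf a ha
  have hdrop : ∀ k, Compat (drop k) (drop k) a := fun k => ha' _ (by simp)
  have hlen : ∀ k, Compat (len k) (len k) a := fun k => ha' _ (by simp)
  have hdec : Compat dec dec a := ha' _ (by simp)
  have hcol : ∀ c, Compat (col c) (col c) a := fun k => ha' _ (by simp)
  have hout : Compat out out a := ha' _ (by simp)
  have hlad : ∀ n, Compat (lad n) (lad n) a := fun k => ha' _ (by simp)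
  clear ha ha' hf f
  have hlen' : ∀ x y, a x y ≠ 0 → y.1.length = x.1.length := fun x y hxy =>
    (hlen x.1.length).mem_of_kill (x := x) (kill_eq_none.2 rfl) hxy
  have hcons : ∀ t α t' α', a (t, α) (t', α') ≠ 0 → ∀ δ,
      ∃ δ', a (δ :: t, α) (δ' :: t', α') ≠ 0 := by
    intro t α t' α' hne δ
    have hl : t'.length = t.length := hlen' _ _ hne
    obtain ⟨⟨s, α''⟩, hs, hs'⟩ := (hdrop t.length).exists_supp (x := (t, α))
      (x' := (δ :: t, α)) (y := (t', α')) (l := (t', α')) (by simp [drop]) hne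
      (by simp [drop, hl]) (by
        rintro ⟨s, α''⟩ hs hs'
        have := hlen' _ _ hs
        simp only at this
        simpa [drop, this] using hs')
    have hsl := hlen' _ _ hs
    match s, hsl with
    | δ' :: s, hsl =>
      simp only [List.length_cons, add_left_inj] at hsl
      simp only [drop, List.length_cons, hsl, if_true, List.tail_cons, Option.some.injEq,
        Prod.mk.injEq] at hs'
      obtain ⟨rfl, rfl⟩ := hs'
      exact ⟨δ', hs⟩
  have hrank : ∀ γ t α γ' t' α', a (γ :: t, α) (γ' :: t', α') ≠ 0 → γ ≤ γ' := by
    intro γ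
    induction γ using WellFoundedLT.induction with
    | _ γ ih =>
      -- Were the head to drop from `γ`, prepending the smaller head to the list of the source
      -- would give a drop starting at that smaller head.
      intro t α γ' t' α' hne
      by_contra! hlt
      obtain ⟨δ', hδ'⟩ := hcons _ _ _ _ hne γ'
      have h1 := hdec.mem_of_kill (x := (γ' :: γ :: t, α)) (kill_eq_none.2 (by
        intro _ _ _ heq
        simp only [List.cons.injEq] at heq
        obtain ⟨rfl, rfl, rfl⟩ := heq
        exact hlt)) hδ' δ' γ' t' rfl
      exact absurd (ih γ' hlt _ _ _ _ _ hδ') h1.not_ge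
  rintro α ⟨s, α'⟩ hα
  obtain rfl : s = [] := List.length_eq_zero_iff.1 (hlen' _ _ hα)
  refine ⟨α', rfl, ?_⟩
  by_contra hν
  let hd : List Λ × A → Λ := fun x => x.1.headD (Classical.arbitrary Λ)
  have hg : ∀ γ, ∃ c, ∀ y, a ([γ], α) y ≠ 0 → hd y ≤ c := by
    intro γ
    obtain ⟨c, hc⟩ := ((a ([γ], α)).support.image hd).exists_le
    exact ⟨c, fun y hy => hc _ (Finset.mem_image_of_mem _ (by simpa using hy))⟩
  choose g hg using hg
  obtain ⟨β, ⟨hβ, hhβ⟩, hcl⟩ := hstat (ν α) (ν α') (Ne.symm hν) g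
  have hsupp : ∀ y, a ([β], α) y ≠ 0 → ∃ β' ∈ E, β ≤ β' ∧ y.1 = [β'] ∧
      (h (ν y.2) β' ↔ h (ν α) β) := by
    rintro ⟨s, α''⟩ hy
    obtain ⟨β', hβ', h1, h2⟩ := (hcol (h (ν α) β)).mem_of_kill (x := ([β], α))
      (kill_eq_none.2 ⟨β, hβ, rfl, Iff.rfl⟩) hy
    simp only at h1
    subst h1
    exact ⟨β', hβ', hrank _ _ _ _ _ _ hy, rfl, h2⟩
  obtain ⟨β', hβ'⟩ := hcons _ _ _ _ hα β
  have hββ' : β < β' := by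
    obtain ⟨β'', h1, h2, h3, h4⟩ := hsupp _ hβ'
    simp only [List.cons.injEq, and_true] at h3
    subst h3
    refine lt_of_le_of_ne h2 ?_
    rintro rfl
    exact hhβ h4.symm
  -- At the maximal head `β₁`, a rung of its ladder above all other heads gives a label that no
  -- other point of the support shares. Moving to the rung `b n β` of the source, this contradicts
  -- the closure of `β` under `g`.
  obtain ⟨⟨s₁, α₁⟩, hmem, hmax⟩ := (a ([β], α)).support.exists_max_image hd
    ⟨_, Finsupp.mem_support_iff.2 hβ'⟩
  have hmax' : ∀ y, a ([β], α) y ≠ 0 → hd y ≤ hd (s₁, α₁) := fun y hy =>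
    hmax y (by simpa using hy)
  rw [Finsupp.mem_support_iff] at hmem
  obtain ⟨β₁, hβ₁E, -, hs₁, -⟩ := hsupp _ hmem
  simp only at hs₁
  subst hs₁
  have hββ₁ : β < β₁ := hββ'.trans_le (hmax' _ hβ')
  obtain ⟨m, hm, hmm⟩ := ((insert β ((a ([β], α)).support.image hd)).filter
    (· < β₁)).exists_max_image id ⟨β, by simp [hββ₁]⟩
  obtain ⟨n, hn⟩ := hcof β₁ hβ₁E m (Finset.mem_filter.1 hm).2
  have hβm : β ≤ m := hmm β (by simp [hββ₁])
  obtain ⟨y₂, hy₂, hy₂'⟩ := (hlad n).exists_supp (x := ([β], α)) (x' := ([b n β], α))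
    (y := ([β₁], α₁)) (l := ([b n β₁], α₁)) (by simp [lad, hβ, (hb β hβ n).2]) hmem
    (by simp [lad, hβ₁E]) (by
      rintro ⟨s, α''⟩ hy hl
      obtain ⟨β'', hβ'', -, hs, -⟩ := hsupp _ hy
      simp only at hs
      subst hs
      simp only [lad, List.map_cons, List.map_nil, hβ'', if_true, Option.some.injEq,
        Prod.mk.injEq, List.cons.injEq, and_true] at hl
      obtain ⟨hl, rfl⟩ := hl
      rcases (show β'' ≤ β₁ from hmax' _ hy).eq_or_lt with rfl | hlt
      · rfl
      · have h1 : β'' ≤ m := hmm β'' (by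
          refine Finset.mem_filter.2 ⟨Finset.mem_insert_of_mem
            (Finset.mem_image.2 ⟨_, Finsupp.mem_support_iff.2 hy, rfl⟩), hlt⟩)
        exact absurd (((hb β'' hβ'' n).1.trans_le h1).trans hn) (by simp [hl]))
  obtain ⟨γ₂, hγ₂, hs₂⟩ := hout.mem_of_kill (x := ([b n β], α))
    (kill_eq_none.2 ⟨_, (hb β hβ n).2, rfl⟩) hy₂
  obtain ⟨s₂, α₂⟩ := y₂
  simp only at hs₂
  subst hs₂
  simp only [lad, List.map_cons, List.map_nil, hγ₂, if_false, Option.some.injEq,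
    Prod.mk.injEq, List.cons.injEq, and_true] at hy₂'
  have h3 : γ₂ ≤ g (b n β) := hg _ _ hy₂
  have h4 := hcl _ (hb β hβ n).1
  rw [hy₂'.1] at h3
  exact absurd ((hn.trans_le h3).trans h4) hβm.not_gt

/-! ### Rigid systems of constraints -/

theorem nameable_of_isRegular {lam : Cardinal.{u}} (hlam : ℵ₀ ≤ lam) {c : Cardinal.{u}}
    (hc : c.IsRegular) (hc₀ : ℵ₀ < c) (hcl : c ≤ lam) : Nameable lam c.ord.ToType := by
  have hcard : #c.ord.ToType = c := mk_ord_toType c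
  have hne : Nonempty c.ord.ToType := by
    rw [← mk_ne_zero_iff, hcard]
    exact (aleph0_pos.trans hc₀).ne'
  have bdd : ∀ s : Set c.ord.ToType, #s < c → ∃ x, ∀ y ∈ s, y < x := by
    intro s hs
    by_contra! hcon
    have h1 : IsCofinal s := hcon
    have h2 := Order.cof_le h1
    rw [Ordinal.cof_toType, hc.cof_ord] at h2
    exact hs.not_ge h2
  refine nameable_of_wellOrder hlam (hcard.trans_le hcl) (fun u => ?_) (fun g b => ?_)
  · obtain ⟨x, hx⟩ := bdd (Set.range u) ((Set.countable_range u).le_aleph0.trans_lt hc₀)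
    exact ⟨x, fun n => hx _ ⟨n, rfl⟩⟩
  · obtain ⟨x, hx⟩ := bdd (g '' Set.Iic b) (mk_image_le.trans_lt (by
      rw [← Set.Iio_insert]
      exact (mk_insert_le).trans_lt
        (add_lt_of_lt hc₀.le (by simpa using mk_Iio_lt b (by simp)) (one_lt_aleph0.trans hc₀))))
    exact ⟨x, fun y hy => hx _ ⟨y, hy, rfl⟩⟩

/-- Induction on the size of `N`: the regular case is `nameable_of_isRegular`, and a set of singular
size is fibred over a small cofinal set with small fibres. -/
theorem nameable {lam : Cardinal.{u}} (hlam : ℵ₀ ≤ lam) :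
    ∀ (c : Cardinal.{u}), c ≤ lam → ∀ N : Type u, #N = c → Nameable lam N := by
  intro c
  induction c using WellFoundedLT.induction with
  | ind c ih =>
  intro hc N hN
  rcases le_or_gt c ℵ₀ with h0 | h0
  · have : Countable N := by rw [← mk_le_aleph0_iff, hN]; exact h0
    exact nameable_of_countable _ _
  obtain ⟨e⟩ : Nonempty (N ≃ c.ord.ToType) := by
    rw [← Cardinal.eq, hN, mk_ord_toType]
  rcases isRegular_or_isSingular h0.le with hr | hs
  · exact (nameable_of_isRegular hlam hr h0 hc).of_injective e.injective
  · refine Nameable.of_injective (N' := c.ord.ToType) ?_ e.injective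
    obtain ⟨S, hS, hcard⟩ := Order.exists_cof_eq c.ord.ToType
    have hlt : #S < c := by
      rw [hcard, Ordinal.cof_toType]
      exact hs.cof_ord_lt
    choose κ hκ hle using hS
    refine Nameable.fibration hlam (K := S) (fun x => ⟨κ x, hκ x⟩) (hlt.le.trans hc)
      (ih _ hlt (hlt.le.trans hc) _ rfl) (fun s => ?_)
    have hfib : #{n // (⟨κ n, hκ n⟩ : S) = s} < c := by
      have hsub : {n | (⟨κ n, hκ n⟩ : S) = s} ⊆ Set.Iic s.1 := by
        rintro n rfl
        exact hle n
      refine (mk_le_mk_of_subset hsub).trans_lt ?_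
      rw [← Set.Iio_insert]
      exact (mk_insert_le).trans_lt
        (add_lt_of_lt h0.le (by simpa using mk_Iio_lt s.1 (by simp)) (one_lt_aleph0.trans h0))
    exact ih _ hfib (hfib.le.trans hc) _ rfl

/-- `f` is rigid if a family of vectors compatible with all `f n` is a scalar multiple of the
standard basis, with one scalar (`scalar`), and if a rational function on `I` that factors through
all `f n` and vanishes where some `f n` is undefined is zero (`zero`). The condition `ne_none`
makes the scalar of an endomorphism integral at the prime carrying `f n`. -/
structure IsRigid {I : Type*} (f : ℕ → I → Option I) : Prop where
  scalar : ∀ a : I → I →₀ ℚ, (∀ n, Compat (f n) (f n) a) →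
    ∃ r : ℚ, ∀ x, a x = Finsupp.single x r
  zero : ∀ h : I → ℚ, (∀ n x y, f n x = f n y → h x = h y) →
    (∀ n x, f n x = none → h x = 0) → ∀ x, h x = 0
  ne_none : ∀ n, ∃ x, f n x ≠ none

theorem exists_rigid {lam : Cardinal.{u}} (hlam : ℵ₀ ≤ lam) :
    ∃ (I : Type u) (f : ℕ → I → Option I), #I = lam ∧ IsRigid f := by
  classical
  obtain ⟨A, hA⟩ : ∃ A : Type u, #A = lam := ⟨lam.out, mk_out _⟩
  obtain ⟨I, ι, f, hI, hι, H⟩ := nameable hlam lam le_rfl A hA A id hA.le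
  have hIA : #I = lam := hI.antisymm (hA ▸ mk_le_of_injective hι)
  obtain ⟨σ⟩ : Nonempty (I ≃ A) := by rw [← Cardinal.eq, hIA, hA]
  have hneA : Nonempty A := by
    rw [← mk_ne_zero_iff, hA]
    exact (aleph0_pos.trans_le hlam).ne'
  set i₀ : I := ι hneA.some with hi₀
  -- `tie` identifies each auxiliary point with a private point of `A`, on which families are
  -- already diagonal; `one` makes the scalars equal.
  let tie : I → Option I := fun x => some (if x ∈ Set.range ι then x else ι (σ x))
  let one : I → Option I := fun _ => some i₀
  let F : Set (I → Option I) := Set.range f ∪ {kill (Set.range ι)ᶜ, tie, one, kill {i₀}}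
  have hF : F.Countable := (Set.countable_range _).union (Set.toFinite _).countable
  -- Identically vanishing constraints are satisfied by every family, hence can be dropped.
  obtain ⟨g, hg⟩ := ((hF.mono (Set.inter_subset_left (t := {g | ∃ x, g x ≠ none}))).insert
    some).exists_eq_range (Set.insert_nonempty _ _)
  have hone : ∃ n, g n = one := by
    have : one ∈ Set.range g := hg ▸ Or.inr ⟨by simp [F], i₀, by simp [one]⟩
    exact this
  have hkill : ∃ n, g n = kill {i₀} := by
    obtain ⟨y, hy⟩ : ∃ y, y ≠ i₀ := by
      have : Infinite I := by rw [← aleph0_le_mk_iff, hIA]; exact hlam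
      exact exists_ne _
    have : kill {i₀} ∈ Set.range g := hg ▸ Or.inr ⟨by simp [F], y, by simp [kill, hy]⟩
    exact this
  refine ⟨I, g, hIA, fun a ha => ?_, fun h h1 h2 => ?_, fun n => ?_⟩
  · have ha' : ∀ k ∈ F, Compat k k a := by
      intro k hk
      by_cases hx : ∃ x, k x ≠ none
      · have : k ∈ Set.range g := hg ▸ Or.inr ⟨hk, hx⟩
        obtain ⟨n, rfl⟩ := this
        exact ha n
      · push Not at hx
        have h0 : ∀ j v, coef k j v = 0 := by
          intro j v
          by_contra hne
          obtain ⟨i, -, hi⟩ := exists_of_coef_ne hne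
          simp [hx] at hi
        exact ⟨fun _ _ _ _ => by rw [h0, h0], fun _ _ _ => h0 _ _⟩
    have hι' : ∀ x y, a (ι x) y ≠ 0 → y = ι x := by
      intro x y hxy
      obtain ⟨y', rfl, rfl⟩ := H a (fun n => ha' _ (Or.inl ⟨n, rfl⟩)) x y hxy
      rfl
    have hkillB : Compat (kill (Set.range ι)ᶜ) (kill (Set.range ι)ᶜ) a := ha' _ (by simp [F])
    have htie : Compat tie tie a := ha' _ (by simp [F])
    have hone' : Compat one one a := ha' _ (by simp [F])
    have hdiag : ∀ x y, a x y ≠ 0 → y = x := by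
      intro x y hxy
      by_cases hx : x ∈ Set.range ι
      · obtain ⟨x, rfl⟩ := hx
        exact hι' x y hxy
      · have hB : ∀ z, a x z ≠ 0 → z ∉ Set.range ι := fun z hz =>
          hkillB.mem_of_kill (x := x) (kill_eq_none.2 hx) hz
        have ht : ∀ z, z ∉ Set.range ι → tie z = some (ι (σ z)) := fun z hz => by
          simp only [tie, if_neg hz]
        obtain ⟨z, hz, hz'⟩ := htie.exists_supp (x' := ι (σ x)) (l := ι (σ y))
          (by rw [ht x hx]; simp [tie]) hxy (ht y (hB y hxy)) (fun z hz hz' => by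
            rw [ht z (hB z hz)] at hz'
            exact σ.injective (hι (Option.some_injective _ hz')))
        obtain rfl := hι' _ _ hz
        have hz'' : ι (σ x) = ι (σ y) := by simpa [tie] using hz'
        exact (σ.injective (hι hz'')).symm
    have hsing : ∀ x, a x = Finsupp.single x (a x x) := by
      intro x
      ext y
      rw [Finsupp.single_apply]
      split_ifs with h
      · rw [h]
      · by_contra hne
        exact h (hdiag x y hne).symm
    refine ⟨a i₀ i₀, fun x => ?_⟩
    have := hone'.1 x i₀ rfl i₀
    rw [hsing x, hsing i₀, coef_single, coef_single] at this
    simp only [one, if_true] at this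
    rw [hsing x, this]
  · obtain ⟨n, hn⟩ := hone
    obtain ⟨m, hm⟩ := hkill
    intro x
    rw [h1 n x i₀ (by rw [hn])]
    exact h2 m i₀ (by rw [hm]; simp [kill])
  · have : g n ∈ insert some (F ∩ {g | ∃ x, g x ≠ none}) := hg ▸ ⟨n, rfl⟩
    rcases this with h | h
    · exact ⟨i₀, by simp [h]⟩
    · exact h.2

/-! ### Groups defined by constraints -/

/-- The group of rational vectors whose image under `f p` is integral at `p`, for all primes `p`.
The kernel of the map induced by `f p` is thus made `p`-divisible. -/
def Grp {I J : Type*} (f : Nat.Primes → I → Option J) : AddSubgroup (I →₀ ℚ) where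
  carrier := {v | ∀ (p : Nat.Primes) j, padicNorm p (coef (f p) j v) ≤ 1}
  zero_mem' := by simp
  add_mem' := by
    intro v w hv hw p j
    have : Fact (p : ℕ).Prime := ⟨p.2⟩
    rw [map_add]
    exact padicNorm.nonarchimedean.trans (max_le (hv p j) (hw p j))
  neg_mem' := by
    intro v hv p j
    rw [map_neg, padicNorm.neg]
    exact hv p j

theorem single_mem {I J : Type*} (f : Nat.Primes → I → Option J) (x : I) :
    Finsupp.single x 1 ∈ Grp f := by
  intro p j
  have : Fact (p : ℕ).Prime := ⟨p.2⟩
  rw [coef_single]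
  split_ifs <;> simp

/-- The standard basis vector at `x`, as an element of `Grp f`. -/
def basis {I J : Type*} (f : Nat.Primes → I → Option J) (x : I) : Grp f :=
  ⟨Finsupp.single x 1, single_mem f x⟩

/-- A homomorphism is the restriction of the `ℚ`-linear map with the same values on basis vectors,
up to a common denominator. -/
theorem hom_spec {I J K L : Type*} {f : Nat.Primes → I → Option J}
    {g : Nat.Primes → K → Option L} (φ : Grp f →+ Grp g) (v : I →₀ ℚ) :
    ∃ n : ℤ, n ≠ 0 ∧ ∃ w : Grp f, w.1 = n • v ∧
      (φ w).1 = n • Finsupp.linearCombination ℚ (fun x => (φ (basis f x)).1) v := by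
  classical
  induction v using Finsupp.induction_linear with
  | zero => exact ⟨1, one_ne_zero, 0, by simp, by simp⟩
  | add v₁ v₂ h₁ h₂ =>
    obtain ⟨n₁, hn₁, w₁, hw₁, hφ₁⟩ := h₁
    obtain ⟨n₂, hn₂, w₂, hw₂, hφ₂⟩ := h₂
    refine ⟨n₁ * n₂, mul_ne_zero hn₁ hn₂, n₂ • w₁ + n₁ • w₂, ?_, ?_⟩
    · simp only [AddSubgroup.coe_add, AddSubgroup.coe_zsmul, hw₁, hw₂]
      module
    · simp only [map_add, map_zsmul, AddSubgroup.coe_add, AddSubgroup.coe_zsmul, hφ₁, hφ₂]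
      module
  | single x r =>
    refine ⟨r.den, by simp, r.num • basis f x, ?_, ?_⟩
    · ext y
      simp only [basis, AddSubgroup.coe_zsmul, Finsupp.smul_apply]
      rw [Finsupp.single_apply, Finsupp.single_apply]
      split_ifs
      · simp [Rat.den_mul_eq_num]
      · simp
    · simp only [map_zsmul, AddSubgroup.coe_zsmul, Finsupp.linearCombination_single]
      rw [← Int.cast_smul_eq_zsmul ℚ r.num, ← Int.cast_smul_eq_zsmul ℚ (r.den : ℤ), smul_smul]
      congr 1
      simp [Rat.den_mul_eq_num]

theorem hom_apply {I J K L : Type*} {f : Nat.Primes → I → Option J}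
    {g : Nat.Primes → K → Option L} (φ : Grp f →+ Grp g) (v : Grp f) :
    (φ v).1 = Finsupp.linearCombination ℚ (fun x => (φ (basis f x)).1) v.1 := by
  obtain ⟨n, hn, w, hw, h⟩ := hom_spec φ v.1
  obtain rfl : w = n • v := Subtype.ext hw
  rw [map_zsmul, AddSubgroup.coe_zsmul, ← Int.cast_smul_eq_zsmul ℚ,
    ← Int.cast_smul_eq_zsmul ℚ n] at h
  exact smul_right_injective _ (Int.cast_ne_zero.2 hn : (n : ℚ) ≠ 0) h

theorem hom_ext {I J K L : Type*} {f : Nat.Primes → I → Option J}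
    {g : Nat.Primes → K → Option L} {φ ψ : Grp f →+ Grp g}
    (h : ∀ x, (φ (basis f x)).1 = (ψ (basis f x)).1) : φ = ψ := by
  ext1 v
  apply Subtype.ext
  rw [hom_apply, hom_apply ψ]
  simp only [h]

/-- An integral vector killed by `f p` is divisible in `Grp f` by all powers of `p`, so its image is
divisible in `Grp g` by all powers of `p`, and hence is killed by `g p`. -/
theorem coef_hom_eq_zero {I J K L : Type*} {f : Nat.Primes → I → Option J}
    {g : Nat.Primes → K → Option L} (φ : Grp f →+ Grp g) (p : Nat.Primes) (u : Grp f)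
    (hu : ∀ q j, ∃ n : ℤ, coef (f q) j u.1 = n) (h0 : ∀ j, coef (f p) j u.1 = 0) (l : L) :
    coef (g p) l (φ u).1 = 0 := by
  have : Fact (p : ℕ).Prime := ⟨p.2⟩
  have hp0 : ((p : ℕ) : ℚ) ≠ 0 := by exact_mod_cast p.2.ne_zero
  have hdiv : ∀ m : ℕ, ∃ w : Grp f, ((p : ℕ) ^ m : ℕ) • w = u := by
    intro m
    refine ⟨⟨(((p : ℕ) : ℚ) ^ m)⁻¹ • u.1, fun q j => ?_⟩, ?_⟩
    · have : Fact (q : ℕ).Prime := ⟨q.2⟩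
      rw [map_smul, smul_eq_mul]
      by_cases hqp : q = p
      · subst hqp
        simp [h0]
      · have hne : (q : ℕ) ≠ p := fun h => hqp (Subtype.ext h)
        have h1 : padicNorm q ((p : ℕ) : ℚ) = 1 := padicNorm.padicNorm_of_prime_of_ne hne
        obtain ⟨n, hn⟩ := hu q j
        have h2 : padicNorm q ((((p : ℕ) : ℚ) ^ m)⁻¹) = 1 := by
          rw [← one_div, padicNorm.div, padicNorm.one]
          have : ∀ m : ℕ, padicNorm q (((p : ℕ) : ℚ) ^ m) = 1 := by
            intro m
            induction m with
            | zero => simp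
            | succ m ih => rw [pow_succ, padicNorm.mul, ih, h1, one_mul]
          rw [this, div_one]
        rw [padicNorm.mul, h2, one_mul, hn]
        exact padicNorm.of_int n
    · apply Subtype.ext
      rw [AddSubgroup.coe_nsmul, ← Nat.cast_smul_eq_nsmul ℚ]
      simp only
      rw [smul_smul]
      push_cast
      rw [mul_inv_cancel₀ (pow_ne_zero _ hp0), one_smul]
  have hle : ∀ m : ℕ, padicNorm p (coef (g p) l (φ u).1) ≤ ((p : ℕ) : ℚ)⁻¹ ^ m := by
    intro m
    obtain ⟨w, hw⟩ := hdiv m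
    have h1 : (φ u).1 = (((p : ℕ) : ℚ) ^ m) • (φ w).1 := by
      rw [← hw, map_nsmul, AddSubgroup.coe_nsmul, ← Nat.cast_smul_eq_nsmul ℚ]
      push_cast
      rfl
    rw [h1, map_smul, smul_eq_mul, padicNorm.mul]
    have h2 : ∀ m : ℕ, padicNorm p (((p : ℕ) : ℚ) ^ m) = ((p : ℕ) : ℚ)⁻¹ ^ m := by
      intro m
      induction m with
      | zero => simp
      | succ m ih => rw [pow_succ, padicNorm.mul, ih, padicNorm.padicNorm_p_of_prime, pow_succ]
    rw [h2]
    exact mul_le_of_le_one_right (by positivity) ((φ w).2 p l)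
  apply padicNorm.zero_of_padicNorm_eq_zero (p := p)
  by_contra hne
  have hpos : 0 < padicNorm p (coef (g p) l (φ u).1) :=
    lt_of_le_of_ne (padicNorm.nonneg _) (Ne.symm hne)
  obtain ⟨m, hm⟩ := exists_pow_lt_of_lt_one hpos
    (inv_lt_one_of_one_lt₀ (by exact_mod_cast p.2.one_lt : (1 : ℚ) < ((p : ℕ) : ℚ)))
  exact absurd (hle m) hm.not_ge

theorem compat_hom {I J K L : Type*} {f : Nat.Primes → I → Option J}
    {g : Nat.Primes → K → Option L} (φ : Grp f →+ Grp g) (p : Nat.Primes) :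
    Compat (f p) (g p) (fun x => (φ (basis f x)).1) := by
  classical
  refine ⟨fun x y h l => ?_, fun x h l => ?_⟩
  · have := coef_hom_eq_zero φ p (basis f x - basis f y) (fun q j => by
        refine ⟨(if f q x = some j then 1 else 0) - (if f q y = some j then 1 else 0), ?_⟩
        simp only [basis, AddSubgroup.coe_sub, map_sub, coef_single]
        push_cast
        rfl) (fun j => by simp [basis, coef_single, h]) l
    rw [map_sub, AddSubgroup.coe_sub, map_sub] at this
    exact sub_eq_zero.1 this
  · exact coef_hom_eq_zero φ p (basis f x) (fun q j => by
      refine ⟨if f q x = some j then 1 else 0, ?_⟩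
      simp only [basis, coef_single]
      push_cast
      rfl) (fun j => by simp [basis, coef_single, h]) l

theorem exists_int {I J : Type*} {f : Nat.Primes → I → Option J} {r : ℚ}
    (h : ∀ p, ∃ x, Finsupp.single x r ∈ Grp f ∧ f p x ≠ none) : ∃ n : ℤ, r = n := by
  classical
  refine ⟨r.num, ?_⟩
  have hden : r.den = 1 := by
    by_contra hne
    obtain ⟨p, hp, hpd⟩ := Nat.exists_prime_and_dvd hne
    have : Fact p.Prime := ⟨hp⟩
    obtain ⟨x, hx, hfx⟩ := h ⟨p, hp⟩
    obtain ⟨j, hj⟩ := Option.ne_none_iff_exists'.1 hfx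
    have h1 : padicNorm p r ≤ 1 := by
      have := hx ⟨p, hp⟩ j
      rwa [coef_single, if_pos hj] at this
    have h2 : padicNorm p (r.num : ℚ) = 1 := by
      refine le_antisymm (padicNorm.of_int _) ?_
      by_contra hlt
      have h3 := (padicNorm.int_lt_one_iff _).1 (not_le.1 hlt)
      have h4 : p ∣ r.num.natAbs := Int.natCast_dvd.1 h3
      exact hp.one_lt.ne' (Nat.dvd_one.1 (r.reduced ▸ Nat.dvd_gcd h4 hpd))
    have h5 : padicNorm p (r.den : ℚ) < 1 := (padicNorm.nat_lt_one_iff _).2 hpd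
    have h6 := padicNorm.mul (p := p) r r.den
    rw [Rat.mul_den_eq_num, h2] at h6
    have h7 : padicNorm p r * padicNorm p (r.den : ℚ) < 1 :=
      mul_lt_one_of_nonneg_of_lt_one_right h1 (padicNorm.nonneg _) h5
    exact absurd h6 h7.ne'
  conv_lhs => rw [← Rat.num_div_den r, hden]
  simp

theorem mk_Grp {I : Type u} {J : Type*} [Infinite I] (f : Nat.Primes → I → Option J) :
    #(Grp f) = #I := by
  apply le_antisymm
  · refine (mk_subtype_le _).trans ?_
    rw [mk_finsupp_lift_of_infinite]
    simp
  · refine mk_le_of_injective (f := basis f) fun x y h => ?_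
    exact Finsupp.single_left_injective one_ne_zero (congrArg Subtype.val h)

/-! ### The cellular cover -/

/-- Index set for the constraints of the final groups: two individual ones and two sequences. -/
abbrev Label := Bool ⊕ ℕ ⊕ ℕ

theorem exists_labelling : ∃ s : Nat.Primes → Label, Function.Surjective s := by
  have : Infinite Nat.Primes := Nat.infinite_setOfPred_prime.to_subtype
  obtain ⟨e⟩ : Nonempty (Nat.Primes ≃ Label) := nonempty_equiv_of_countable
  exact ⟨e, e.surjective⟩

theorem coef_some {I : Type*} (v : I →₀ ℚ) (j : I) : coef some j v = v j :=
  coef_eq_of_unique rfl fun _ _ h => Option.some_injective _ h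

/-- The constraints defining `M`. Only those of the sequence `f` matter for the endomorphisms of `M`;
the others match the restrictions to `I` of the constraints in `coverData`. -/
def baseData {I : Type*} (f : ℕ → I → Option I) (i₀ : I) : Label → I → Option I
  | .inl true => some
  | .inl false => kill {i₀}
  | .inr (.inl n) => f n
  | .inr (.inr _) => some

open scoped Classical in
/-- The constraints defining `G`, on the disjoint union of `I` and `I'`: the first one makes the
vectors on `I'` a fully invariant subspace, the second one ties the scalars on `I` and `I'`
together, and the two sequences make both parts rigid. -/
def coverData {I I' : Type*} (f : ℕ → I → Option I) (f' : ℕ → I' → Option I') (i₀ : I)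
    (i₀' : I') : Label → I ⊕ I' → Option (I ⊕ I')
  | .inl true => kill (Set.range Sum.inr)
  | .inl false => fun z => some (if z = .inr i₀' then .inl i₀ else z)
  | .inr (.inl n) => Sum.elim (fun x => (f n x).map .inl) (fun y => some (.inr y))
  | .inr (.inr n) => Sum.elim (fun x => some (.inl x)) (fun y => (f' n y).map .inr)

theorem coef_base {I I' : Type*} (f : ℕ → I → Option I) (f' : ℕ → I' → Option I') (i₀ : I)
    (i₀' : I') (l : Label) (j : I) (v : I ⊕ I' →₀ ℚ) :
    coef (baseData f i₀ l) j (Finsupp.comapDomain Sum.inl v Sum.inl_injective.injOn) =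
        coef (coverData f f' i₀ i₀' l) (.inl j) v ∨
      coef (baseData f i₀ l) j
        (Finsupp.comapDomain Sum.inl v Sum.inl_injective.injOn) = 0 := by
  match l with
  | .inl true =>
    left
    refine coef_comap Sum.inl_injective (fun y => ?_) ?_
    · simp [baseData, coverData, kill]
    · rintro (y | y) - h
      · exact ⟨y, rfl⟩
      · simp [coverData, kill] at h
  | .inl false =>
    by_cases hj : j = i₀
    · right
      by_contra hne
      obtain ⟨i, -, hi⟩ := exists_of_coef_ne hne
      obtain ⟨h1, h2⟩ := kill_eq_some.1 hi
      exact h1 (h2.trans hj)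
    · left
      refine coef_comap Sum.inl_injective (fun y => ?_) ?_
      · simp only [baseData, coverData, kill_eq_some, Set.mem_singleton_iff, reduceCtorEq,
          if_false, Option.some.injEq, Sum.inl.injEq, and_iff_right_iff_imp]
        rintro rfl
        exact hj
      · rintro (y | y) - h
        · exact ⟨y, rfl⟩
        · simp only [coverData, Option.some.injEq] at h
          split_ifs at h
          exact absurd (Sum.inl_injective h).symm hj
  | .inr (.inl n) =>
    left
    refine coef_comap Sum.inl_injective (fun y => ?_) ?_
    · simp [baseData, coverData]
    · rintro (y | y) - h
      · exact ⟨y, rfl⟩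
      · simp [coverData] at h
  | .inr (.inr n) =>
    left
    refine coef_comap Sum.inl_injective (fun y => ?_) ?_
    · simp [baseData, coverData]
    · rintro (y | y) - h
      · exact ⟨y, rfl⟩
      · simp [coverData] at h

variable {I I' : Type*} {f : ℕ → I → Option I} {f' : ℕ → I' → Option I'} {i₀' : I'} {i₀ : I}

/-- The cellular cover `G → M`: restriction of vectors from `I ⊕ I'` to `I`. -/
def cover (f : ℕ → I → Option I) (f' : ℕ → I' → Option I') (i₀ : I) (i₀' : I')
    (s : Nat.Primes → Label) :
    Grp (fun p => coverData f f' i₀ i₀' (s p)) →+ Grp (fun p => baseData f i₀ (s p)) where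
  toFun v := ⟨Finsupp.comapDomain Sum.inl v.1 Sum.inl_injective.injOn, fun p j => by
    rcases coef_base f f' i₀ i₀' (s p) j v.1 with h | h
    · rw [h]
      exact v.2 p _
    · rw [h]
      simp⟩
  map_zero' := by
    ext x
    simp
  map_add' v w := by
    ext x
    simp

theorem cover_basis_inl (s : Nat.Primes → Label) (x : I) :
    (cover f f' i₀ i₀' s (basis _ (.inl x))).1 = Finsupp.single x 1 := by
  classical
  ext y
  simp [cover, basis, Finsupp.single_apply]

theorem cover_basis_inr (s : Nat.Primes → Label) (y : I') :
    (cover f f' i₀ i₀' s (basis _ (.inr y))).1 = 0 := by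
  ext z
  simp [cover, basis]

theorem base_ne_none [Nontrivial I] (hf : IsRigid f) (l : Label) :
    ∃ x, baseData f i₀ l x ≠ none := by
  match l with
  | .inl true => exact ⟨i₀, by simp [baseData]⟩
  | .inl false =>
    obtain ⟨y, hy⟩ := exists_ne i₀
    exact ⟨y, by simp [baseData, kill, hy]⟩
  | .inr (.inl n) => exact hf.ne_none n
  | .inr (.inr n) => exact ⟨i₀, by simp [baseData]⟩

theorem cover_ne_none (hf : IsRigid f) (l : Label) :
    ∃ x, coverData f f' i₀ i₀' l (.inl x) ≠ none := by
  match l with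
  | .inl true => exact ⟨i₀, by simp [coverData, kill]⟩
  | .inl false => exact ⟨i₀, by simp [coverData]⟩
  | .inr (.inl n) =>
    obtain ⟨x, hx⟩ := hf.ne_none n
    exact ⟨x, by simpa [coverData] using hx⟩
  | .inr (.inr n) => exact ⟨i₀, by simp [coverData]⟩

theorem end_base [Nontrivial I] (hf : IsRigid f) {s : Nat.Primes → Label}
    (hs : Function.Surjective s)
    (φ : Grp (fun p => baseData f i₀ (s p)) →+ Grp (fun p => baseData f i₀ (s p))) :
    ∃ n : ℤ, ∀ x, φ x = n • x := by
  obtain ⟨r, hr⟩ := hf.scalar (fun x => (φ (basis _ x)).1) (fun n => by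
    obtain ⟨p, hp⟩ := hs (.inr (.inl n))
    have := compat_hom φ p
    simp only [hp] at this
    exact this)
  obtain ⟨n, rfl⟩ : ∃ n : ℤ, r = n := exists_int fun p => by
    obtain ⟨x, hx⟩ := base_ne_none (i₀ := i₀) hf (s p)
    exact ⟨x, hr x ▸ (φ (basis _ x)).2, hx⟩
  refine ⟨n, fun x => ?_⟩
  have : φ = n • AddMonoidHom.id _ := hom_ext fun x => by
    rw [hr x]
    simp [basis]
  rw [this]
  rfl

theorem hom_cover_base (hf : IsRigid f) {s : Nat.Primes → Label}
    (hs : Function.Surjective s) [Nontrivial I]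
    (φ : Grp (fun p => coverData f f' i₀ i₀' (s p)) →+ Grp (fun p => baseData f i₀ (s p))) :
    ∃ n : ℤ, φ = n • cover f f' i₀ i₀' s := by
  have hc : ∀ l, Compat (coverData f f' i₀ i₀' l) (baseData f i₀ l)
      (fun x => (φ (basis _ x)).1) := by
    intro l
    obtain ⟨p, rfl⟩ := hs l
    exact compat_hom φ p
  obtain ⟨r, hr⟩ := hf.scalar (fun x => (φ (basis _ (.inl x))).1) (fun n =>
    ⟨fun x y h => (hc (.inr (.inl n))).1 (.inl x) (.inl y) (by simp [coverData, h]),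
      fun x h => (hc (.inr (.inl n))).2 (.inl x) (by simp [coverData, h])⟩)
  have h0 : ∀ y, (φ (basis _ (.inr y))).1 = 0 := by
    intro y
    ext j
    rw [← coef_some]
    exact (hc (.inl true)).2 (.inr y) (by simp [coverData, kill]) j
  obtain ⟨n, rfl⟩ : ∃ n : ℤ, r = n := exists_int fun p => by
    obtain ⟨x, hx⟩ := base_ne_none (i₀ := i₀) hf (s p)
    exact ⟨x, hr x ▸ (φ (basis _ (.inl x))).2, hx⟩
  refine ⟨n, hom_ext ?_⟩
  rintro (x | y)
  · rw [hr x, AddMonoidHom.smul_apply, AddSubgroup.coe_zsmul, cover_basis_inl]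
    simp
  · rw [h0 y, AddMonoidHom.smul_apply, AddSubgroup.coe_zsmul, cover_basis_inr]
    simp

theorem end_cover (hf : IsRigid f) (hf' : IsRigid f') {s : Nat.Primes → Label}
    (hs : Function.Surjective s)
    (φ : Grp (fun p => coverData f f' i₀ i₀' (s p)) →+
      Grp (fun p => coverData f f' i₀ i₀' (s p))) :
    ∃ n : ℤ, φ = n • AddMonoidHom.id _ := by
  classical
  set a : I ⊕ I' → I ⊕ I' →₀ ℚ := fun x => (φ (basis _ x)).1 with ha
  have hc : ∀ l, Compat (coverData f f' i₀ i₀' l) (coverData f f' i₀ i₀' l) a := by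
    intro l
    obtain ⟨p, rfl⟩ := hs l
    exact compat_hom φ p
  have h1 : ∀ y z, a (.inr y) z ≠ 0 → z ∈ Set.range (Sum.inr : I' → I ⊕ I') := fun y z h =>
    (hc (.inl true)).mem_of_kill (x := .inr y) (by simp [coverData, kill]) h
  obtain ⟨r', hr'⟩ := hf'.scalar
    (fun y => Finsupp.comapDomain Sum.inr (a (.inr y)) Sum.inr_injective.injOn) (fun n => by
      refine (hc (.inr (.inr n))).comap Sum.inr_injective ?_ ?_ .inr ?_ ?_
      · intro x y h
        simp [coverData, h]
      · intro x h
        simp [coverData, h]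
      · intro y l
        simp [coverData]
      · intro x y l h _
        exact h1 x y h)
  obtain ⟨r, hr⟩ := hf.scalar
    (fun x => Finsupp.comapDomain Sum.inl (a (.inl x)) Sum.inl_injective.injOn) (fun n => by
      refine (hc (.inr (.inl n))).comap Sum.inl_injective ?_ ?_ .inl ?_ ?_
      · intro x y h
        simp [coverData, h]
      · intro x h
        simp [coverData, h]
      · intro y l
        simp [coverData]
      · rintro x (y | y) l - h
        · exact ⟨y, rfl⟩
        · simp [coverData] at h)
  have h2 : ∀ y x, a (.inl x) (.inr y) = 0 := by
    intro y
    have hco : ∀ n v, coef (coverData f f' i₀ i₀' (.inr (.inl n))) (.inr y) v = v (.inr y) := by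
      intro n v
      refine coef_eq_of_unique (by simp [coverData]) ?_
      rintro (x | x) - h
      · simp [coverData] at h
      · simpa [coverData] using h
    refine hf.zero _ (fun n x x' h => ?_) (fun n x h => ?_)
    · rw [← hco n, ← hco n]
      exact (hc _).1 _ _ (by simp [coverData, h]) _
    · rw [← hco n]
      exact (hc _).2 _ (by simp [coverData, h]) _
  have hal : ∀ x, a (.inl x) = Finsupp.single (.inl x) r := by
    intro x
    ext (z | z)
    · have := DFunLike.congr_fun (hr x) z
      simpa [Finsupp.single_apply] using this
    · rw [h2]
      simp
  have har : ∀ y, a (.inr y) = Finsupp.single (.inr y) r' := by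
    intro y
    ext (z | z)
    · have : a (.inr y) (.inl z) = 0 := by
        by_contra h
        simpa using h1 _ _ h
      rw [this]
      simp
    · have := DFunLike.congr_fun (hr' y) z
      simpa [Finsupp.single_apply] using this
  -- The constraint `inl false` gives the points `inl i₀` and `inr i₀'` the same label.
  have hrr : r = r' := by
    have := (hc (.inl false)).1 (.inl i₀) (.inr i₀') (by simp [coverData]) (.inl i₀)
    rw [hal, har, coef_single, coef_single] at this
    simpa [coverData] using this
  subst hrr
  obtain ⟨n, rfl⟩ : ∃ n : ℤ, r = n := exists_int
      (f := fun p => coverData f f' i₀ i₀' (s p)) fun p => by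
    obtain ⟨x, hx⟩ := cover_ne_none (f' := f') (i₀ := i₀) (i₀' := i₀') hf (s p)
    exact ⟨.inl x, by rw [← hal x]; exact (φ (basis _ (.inl x))).2, hx⟩
  refine ⟨n, hom_ext ?_⟩
  rintro (x | y)
  · refine (hal x).trans ?_
    simp [basis]
  · refine (har y).trans ?_
    simp [basis]

theorem cover_bijective [Nontrivial I] (hf : IsRigid f) (hf' : IsRigid f')
    {s : Nat.Primes → Label} (hs : Function.Surjective s) :
    Function.Bijective (fun ψ : Grp (fun p => coverData f f' i₀ i₀' (s p)) →+
      Grp (fun p => coverData f f' i₀ i₀' (s p)) => (cover f f' i₀ i₀' s).comp ψ) := by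
  constructor
  · intro φ ψ h
    obtain ⟨n, rfl⟩ := end_cover hf hf' hs φ
    obtain ⟨m, rfl⟩ := end_cover hf hf' hs ψ
    have h1 := congrArg Subtype.val (DFunLike.congr_fun h (basis _ (.inl i₀)))
    simp only [AddMonoidHom.comp_apply, AddMonoidHom.smul_apply, AddMonoidHom.id_apply,
      map_zsmul, AddSubgroup.coe_zsmul, cover_basis_inl] at h1
    have h2 := DFunLike.congr_fun h1 i₀
    simp only [Finsupp.smul_apply, Finsupp.single_eq_same, zsmul_eq_mul, mul_one,
      Int.cast_inj] at h2
    rw [h2]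
  · intro φ
    obtain ⟨n, rfl⟩ := hom_cover_base hf hs φ
    refine ⟨n • AddMonoidHom.id _, ?_⟩
    ext1 v
    simp

end

end CellCover

/-- For every infinite cardinal `λ` there is a torsion-free abelian group `M` of
cardinality `λ` with `End(M) ≅ ℤ`, such that for every infinite cardinal `κ ≥ λ`
there exists a cellular cover `c : G → M` whose kernel has cardinality `κ`.
(In particular `M` has a proper class of non-isomorphic cellular covers.) -/
theorem exists_group_with_arbitrarily_large_cellular_cover_kernels
    (lam : Cardinal.{u}) (hlam : Cardinal.aleph0 ≤ lam) :
    ∃ (M : Type u) (_ : AddCommGroup M),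
      NoZeroSMulDivisors ℤ M ∧
      Cardinal.mk M = lam ∧
      (∀ φ : M →+ M, ∃ n : ℤ, ∀ x, φ x = n • x) ∧
      ∀ κ : Cardinal.{u}, Cardinal.aleph0 ≤ κ → lam ≤ κ →
        ∃ (G : Type u) (_ : AddCommGroup G) (c : G →+ M),
          Function.Bijective (fun ψ : G →+ G => c.comp ψ) ∧
          Cardinal.mk c.ker = κ := by
  open CellCover in
  obtain ⟨s, hs⟩ := exists_labelling
  obtain ⟨I, f, hI, hf⟩ := exists_rigid hlam
  have hinf : Infinite I := by rw [← Cardinal.aleph0_le_mk_iff, hI]; exact hlam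
  obtain ⟨i₀⟩ : Nonempty I := inferInstance
  refine ⟨Grp (fun p => baseData f i₀ (s p)), inferInstance, ?_, ?_, end_base hf hs, ?_⟩
  · refine ⟨fun {n v} h => ?_⟩
    have h' := congrArg Subtype.val h
    rw [AddSubgroup.coe_zsmul, AddSubgroup.coe_zero] at h'
    rcases smul_eq_zero.1 h' with h | h
    · exact Or.inl h
    · exact Or.inr (Subtype.ext h)
  · rw [mk_Grp, hI]
  · intro κ hκ hle
    obtain ⟨I', f', hI', hf'⟩ := exists_rigid hκ
    have hinf' : Infinite I' := by rw [← Cardinal.aleph0_le_mk_iff, hI']; exact hκ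
    obtain ⟨i₀'⟩ : Nonempty I' := inferInstance
    refine ⟨Grp (fun p => coverData f f' i₀ i₀' (s p)), inferInstance,
      cover f f' i₀ i₀' s, cover_bijective hf hf' hs, le_antisymm ?_ ?_⟩
    · refine (Cardinal.mk_subtype_le _).trans ?_
      rw [mk_Grp, Cardinal.mk_sum, Cardinal.lift_id, Cardinal.lift_id, hI, hI']
      exact (Cardinal.add_eq_right hκ hle).le
    · rw [← hI']
      refine Cardinal.mk_le_of_injective
        (f := fun y => (⟨basis _ (.inr y), ?_⟩ : (cover f f' i₀ i₀' s).ker)) ?_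
      · exact Subtype.ext (cover_basis_inr s y)
      · intro x y h
        have h' := congrArg (fun z => z.1.1) h
        exact Sum.inr_injective (Finsupp.single_left_injective one_ne_zero h')
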